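/- Normal solutions of the Lagrange multiplier system satisfy Lagrange's equations: Let (ρ,C) be local Lie algebroid data on ℝ^n with fiber ℝ^m satisfying the first structure equation, and let L : ℝ^n × ℝ^m → ℝ be C². Suppose x : [t₀,t₁] → ℝ^n, y : [t₀,t₁] → ℝ^m and p : [t₀,t₁] → ℝ^n are C¹ curves satisfying, for all t ∈ [t₀,t₁]: (i) Σ_i p_i(t) ρ^i_α(x(t)) = ∂L/∂y^α(x(t),y(t)) for all α; (ii) (x^i)'(t) = Σ_α ρ^i_α(x(t)) y^α(t) for all i; and (iii) (p_i)'(t) = ∂L/∂x^i(x(t),y(t)) − Σ_{j,α} p_j(t) ∂ρ^j_α/∂x^i(x(t)) y^α(t) for all i. Then (x,y) is a solution of Lagrange's equations: d/dt[∂L/∂y^α(x(t),y(t))] + Σ_{β,γ} C^γ_{αβ}(x(t)) y^β(t) ∂L/∂y^γ(x(t),y(t)) = Σ_i ρ^i_α(x(t)) ∂L/∂x^i(x(t),y(t)) for all α and all t ∈ [t₀,t₁]. -/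

import Mathlib

/-!
Differentiating `Σ_i p_i ρ^i_α(x) = ∂L/∂y^α(x,y)` in time and substituting the equations for
`x'` and `p'` gives `Σ_i ρ^i_α ∂L/∂x^i` minus the contraction of `p_j y^β` with
`Σ_i (ρ^i_α ∂_i ρ^j_β − ρ^i_β ∂_i ρ^j_α)`. By the first structure equation the latter is
`Σ_γ ρ^j_γ C^γ_{αβ}`, and contracting it with `p_j` gives back `C^γ_{αβ} ∂L/∂y^γ`
(`multiplier_contraction`).

The multiplier relation holds only on `[t₀,t₁]`, whereas Lagrange's equations are stated with
two-sided derivatives, so at the endpoints one needs `∂L/∂y^α(x,y)` to be differentiable in `t`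
(`differentiable_pLy_comp`, where `L ∈ C²` enters) and that derivatives within a nontrivial
closed interval are unique.
-/

open Set

/-- Partial derivative of a scalar function on `ℝ^n` in the `j`-th coordinate direction. -/
noncomputable def pderiv' {n : ℕ} (f : (Fin n → ℝ) → ℝ) (x : Fin n → ℝ) (j : Fin n) : ℝ :=
  deriv (fun s => f (Function.update x j s)) (x j)

/-- Local Lie algebroid data on `ℝ^n` with fiber `ℝ^m`: smooth anchor coefficients
`ρ^i_α` and smooth structure functions `C^α_{βγ}`, antisymmetric in the lower indices. -/
structure LocalAlgebroidData (n m : ℕ) where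
  ρ : (Fin n → ℝ) → Fin n → Fin m → ℝ
  C : (Fin n → ℝ) → Fin m → Fin m → Fin m → ℝ
  smooth_ρ : ContDiff ℝ (⊤ : ℕ∞) ρ
  smooth_C : ContDiff ℝ (⊤ : ℕ∞) C
  antisymm : ∀ x α β γ, C x α β γ = - C x α γ β

/-- Partial derivative `∂L/∂x^i` of a Lagrangian `L : ℝ^n × ℝ^m → ℝ`. -/
noncomputable def pLx {n m : ℕ} (L : (Fin n → ℝ) × (Fin m → ℝ) → ℝ)
    (x : Fin n → ℝ) (y : Fin m → ℝ) (i : Fin n) : ℝ :=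
  pderiv' (fun z => L (z, y)) x i

/-- Partial derivative `∂L/∂y^α` of a Lagrangian `L : ℝ^n × ℝ^m → ℝ`. -/
noncomputable def pLy {n m : ℕ} (L : (Fin n → ℝ) × (Fin m → ℝ) → ℝ)
    (x : Fin n → ℝ) (y : Fin m → ℝ) (α : Fin m) : ℝ :=
  pderiv' (fun w => L (x, w)) y α

/-- The Euler–Lagrange expression
`EL_α(t) = d/dt[∂L/∂y^α] + Σ_{β,γ} C^γ_{αβ} y^β ∂L/∂y^γ − Σ_i ρ^i_α ∂L/∂x^i`
of a curve `(x,y)`. -/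
noncomputable def ELexpr {n m : ℕ} (A : LocalAlgebroidData n m)
    (L : (Fin n → ℝ) × (Fin m → ℝ) → ℝ)
    (x : ℝ → Fin n → ℝ) (y : ℝ → Fin m → ℝ) (α : Fin m) (t : ℝ) : ℝ :=
  deriv (fun s => pLy L (x s) (y s) α) t
    + ∑ β, ∑ γ, A.C (x t) γ α β * y t β * pLy L (x t) (y t) γ
    - ∑ i, A.ρ (x t) i α * pLx L (x t) (y t) i

/-- The curve `(x,y)` is admissible on `[t₀,t₁]`: `(x^i)' = Σ_α ρ^i_α(x) y^α`. -/
def IsAdmissible {n m : ℕ} (A : LocalAlgebroidData n m) (t₀ t₁ : ℝ)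
    (x : ℝ → Fin n → ℝ) (y : ℝ → Fin m → ℝ) : Prop :=
  ∀ t ∈ Icc t₀ t₁, ∀ i, deriv (fun s => x s i) t = ∑ α, A.ρ (x t) i α * y t α

/-- `(x,y)` is a solution of Lagrange's equations for `L` on `[t₀,t₁]`. -/
def IsLagrangeSolution {n m : ℕ} (A : LocalAlgebroidData n m)
    (L : (Fin n → ℝ) × (Fin m → ℝ) → ℝ) (t₀ t₁ : ℝ)
    (x : ℝ → Fin n → ℝ) (y : ℝ → Fin m → ℝ) : Prop :=
  ∀ α, ∀ t ∈ Icc t₀ t₁,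
    deriv (fun s => pLy L (x s) (y s) α) t
        + ∑ β, ∑ γ, A.C (x t) γ α β * y t β * pLy L (x t) (y t) γ
      = ∑ i, A.ρ (x t) i α * pLx L (x t) (y t) i

/-- A local morphism of local Lie algebroid data: a pair of smooth maps `(φ, Φ)`
satisfying the admissibility and morphism conditions. -/
structure LocalMorphism {n m n' m' : ℕ}
    (A : LocalAlgebroidData n m) (A' : LocalAlgebroidData n' m') where
  φ : (Fin n → ℝ) → Fin n' → ℝ
  Φ : (Fin n → ℝ) → Fin m' → Fin m → ℝ
  smooth_φ : ContDiff ℝ (⊤ : ℕ∞) φ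
  smooth_Φ : ContDiff ℝ (⊤ : ℕ∞) Φ
  adm : ∀ x (k : Fin n') (α : Fin m),
    ∑ i, pderiv' (fun z => φ z k) x i * A.ρ x i α
      = ∑ β, A'.ρ (φ x) k β * Φ x β α
  morph : ∀ x (α : Fin m') (μ ν : Fin m),
    (∑ i, (A.ρ x i ν * pderiv' (fun z => Φ z α μ) x i
            - A.ρ x i μ * pderiv' (fun z => Φ z α ν) x i))
      + (∑ β, Φ x α β * A.C x β μ ν)
      - (∑ β, ∑ γ, A'.C (φ x) α β γ * Φ x β μ * Φ x γ ν) = 0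

/-- The first structure equation of local Lie algebroid data. -/
def FirstStructureEq {n m : ℕ} (A : LocalAlgebroidData n m) : Prop :=
  ∀ (x : Fin n → ℝ) (i : Fin n) (α β : Fin m),
    ∑ j, (A.ρ x j α * pderiv' (fun z => A.ρ z i β) x j
           - A.ρ x j β * pderiv' (fun z => A.ρ z i α) x j)
      = ∑ γ, A.ρ x i γ * A.C x γ α β

theorem pderiv'_eq_fderiv {n : ℕ} {f : (Fin n → ℝ) → ℝ} {x : Fin n → ℝ}
    (hf : DifferentiableAt ℝ f x) (j : Fin n) :
    pderiv' f x j = fderiv ℝ f x (Pi.single j 1) := by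
  have h := hasDerivAt_update x j (x j)
  have hf' : HasFDerivAt f (fderiv ℝ f x) (Function.update x j (x j)) := by
    rw [Function.update_eq_self]; exact hf.hasFDerivAt
  exact (hf'.comp_hasDerivAt (x j) h).deriv

/-- Chain rule along a curve, in terms of coordinate partial derivatives. -/
theorem hasDerivAt_comp_curve {n : ℕ} {f : (Fin n → ℝ) → ℝ} {x : ℝ → Fin n → ℝ} {t : ℝ}
    (hf : DifferentiableAt ℝ f (x t)) (hx : DifferentiableAt ℝ x t) :
    HasDerivAt (fun s => f (x s)) (∑ j, pderiv' f (x t) j * deriv (fun s => x s j) t) t := by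
  have h := hf.hasFDerivAt.comp_hasDerivAt t hx.hasDerivAt
  have hd : ∀ j, deriv (fun s => x s j) t = deriv x t j := fun j =>
    ((hasDerivAt_pi.1 hx.hasDerivAt) j).deriv
  have key : ∑ j, pderiv' f (x t) j * deriv (fun s => x s j) t
      = fderiv ℝ f (x t) (deriv x t) := by
    conv_rhs => rw [← Finset.univ_sum_single (deriv x t), map_sum]
    refine Finset.sum_congr rfl fun j _ => ?_
    rw [pderiv'_eq_fderiv hf, hd, mul_comm, ← smul_eq_mul, ← map_smul, ← Pi.single_smul,
      smul_eq_mul, mul_one]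
  rw [key]
  exact h

theorem pLy_eq_fderiv {n m : ℕ} {L : (Fin n → ℝ) × (Fin m → ℝ) → ℝ}
    (hL : Differentiable ℝ L) (x : Fin n → ℝ) (y : Fin m → ℝ) (α : Fin m) :
    pLy L x y α = fderiv ℝ L (x, y) (0, Pi.single α 1) := by
  have h : HasFDerivAt (fun w => L (x, w))
      ((fderiv ℝ L (x, y)).comp (ContinuousLinearMap.inr ℝ (Fin n → ℝ) (Fin m → ℝ))) y :=
    (hL (x, y)).hasFDerivAt.comp y (hasFDerivAt_prodMk_right x y)
  rw [pLy, pderiv'_eq_fderiv h.differentiableAt, h.fderiv]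
  rfl

theorem differentiable_pLy_comp {n m : ℕ} {L : (Fin n → ℝ) × (Fin m → ℝ) → ℝ}
    (hL : ContDiff ℝ 2 L) {x : ℝ → Fin n → ℝ} {y : ℝ → Fin m → ℝ}
    (hx : Differentiable ℝ x) (hy : Differentiable ℝ y) (α : Fin m) :
    Differentiable ℝ (fun s => pLy L (x s) (y s) α) := by
  have hd : Differentiable ℝ (fderiv ℝ L) :=
    (hL.fderiv_right (m := 1) (by norm_num)).differentiable (by norm_num)
  simp only [pLy_eq_fderiv (hL.differentiable (by norm_num))]
  exact (hd.comp (hx.prodMk hy)).clm_apply (differentiable_const _)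

/-- The pointwise algebra, with `r = ρ(x)`, `D j β i = ∂_i ρ^j_β(x)`, `c γ α β = C^γ_{αβ}(x)` and
`l = ∂L/∂x`: once `x'` and `p'` are substituted into the time derivative of `Σ_i p_i ρ^i_α`,
the first structure equation turns the terms containing `D` into structure-function terms. -/
theorem multiplier_contraction {n m : ℕ} (r : Fin n → Fin m → ℝ)
    (D : Fin n → Fin m → Fin n → ℝ) (c : Fin m → Fin m → Fin m → ℝ) (p l : Fin n → ℝ)
    (y : Fin m → ℝ) (α : Fin m)
    (hS : ∀ i β, ∑ j, (r j α * D i β j - r j β * D i α j) = ∑ γ, r i γ * c γ α β) :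
    (∑ i, ((l i - ∑ j, ∑ β, p j * D j β i * y β) * r i α
        + p i * ∑ j, D i α j * ∑ β, r j β * y β))
      + ∑ β, ∑ γ, c γ α β * y β * ∑ i, p i * r i γ
      = ∑ i, r i α * l i := by
  have e1 : ∑ β, ∑ γ, c γ α β * y β * ∑ i, p i * r i γ
      = ∑ i, ∑ β, p i * y β * ∑ γ, r i γ * c γ α β := by
    conv_rhs => rw [Finset.sum_comm]
    refine Finset.sum_congr rfl fun β _ => ?_
    simp only [Finset.mul_sum]
    rw [Finset.sum_comm]
    exact Finset.sum_congr rfl fun i _ => Finset.sum_congr rfl fun γ _ => by ring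
  have e2 : ∑ i, (∑ j, ∑ β, p j * D j β i * y β) * r i α
      = ∑ j, ∑ β, ∑ i, p j * y β * (r i α * D j β i) := by
    simp only [Finset.sum_mul]
    rw [Finset.sum_comm]
    refine Finset.sum_congr rfl fun j _ => ?_
    rw [Finset.sum_comm]
    exact Finset.sum_congr rfl fun β _ => Finset.sum_congr rfl fun i _ => by ring
  have e3 : ∑ i, p i * ∑ j, D i α j * ∑ β, r j β * y β
      = ∑ i, ∑ β, ∑ j, p i * y β * (r j β * D i α j) := by
    simp only [Finset.mul_sum]
    refine Finset.sum_congr rfl fun i _ => ?_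
    rw [Finset.sum_comm]
    exact Finset.sum_congr rfl fun β _ => Finset.sum_congr rfl fun j _ => by ring
  have e4 : ∑ i, ∑ β, p i * y β * ∑ γ, r i γ * c γ α β
      = ∑ i, ∑ β, ∑ j, p i * y β * (r j α * D i β j)
        - ∑ i, ∑ β, ∑ j, p i * y β * (r j β * D i α j) := by
    simp only [← hS, Finset.mul_sum, mul_sub, Finset.sum_sub_distrib]
  have e5 : ∑ i, l i * r i α = ∑ i, r i α * l i :=
    Finset.sum_congr rfl fun i _ => mul_comm _ _
  simp only [sub_mul, Finset.sum_add_distrib, Finset.sum_sub_distrib]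
  rw [e1, e2, e3, e4, e5]
  ring

/-- **Normal solutions of the Lagrange multiplier system satisfy Lagrange's equations.**
If C¹ curves `x`, `y`, `p` satisfy (i) `Σ_i p_i ρ^i_α(x) = ∂L/∂y^α(x,y)`, (ii) the
admissibility equation `(x^i)' = Σ_α ρ^i_α(x) y^α`, and (iii) the costate equation
`(p_i)' = ∂L/∂x^i(x,y) − Σ_{j,α} p_j ∂ρ^j_α/∂x^i(x) y^α`, then `(x,y)` solves
Lagrange's equations for `L`. -/
theorem normal_multiplier_solutions_satisfy_lagrange
    {n m : ℕ} (A : LocalAlgebroidData n m) (hA : FirstStructureEq A)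
    (L : (Fin n → ℝ) × (Fin m → ℝ) → ℝ) (hL : ContDiff ℝ 2 L)
    (t₀ t₁ : ℝ) (ht : t₀ < t₁)
    (x : ℝ → Fin n → ℝ) (y : ℝ → Fin m → ℝ) (p : ℝ → Fin n → ℝ)
    (hx : ContDiff ℝ 1 x) (hy : ContDiff ℝ 1 y) (hp : ContDiff ℝ 1 p)
    (h1 : ∀ t ∈ Icc t₀ t₁, ∀ α,
      ∑ i, p t i * A.ρ (x t) i α = pLy L (x t) (y t) α)
    (h2 : ∀ t ∈ Icc t₀ t₁, ∀ i,
      deriv (fun s => x s i) t = ∑ α, A.ρ (x t) i α * y t α)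
    (h3 : ∀ t ∈ Icc t₀ t₁, ∀ i,
      deriv (fun s => p s i) t
        = pLx L (x t) (y t) i
          - ∑ j, ∑ α, p t j * pderiv' (fun z => A.ρ z j α) (x t) i * y t α) :
    IsLagrangeSolution A L t₀ t₁ x y := by
  intro α t htI
  have hxd : Differentiable ℝ x := hx.differentiable (by norm_num)
  have hyd : Differentiable ℝ y := hy.differentiable (by norm_num)
  have hpd : Differentiable ℝ p := hp.differentiable (by norm_num)
  have hρd : ∀ i, Differentiable ℝ (fun z => A.ρ z i α) := fun i =>
    differentiable_pi.1 (differentiable_pi.1 (A.smooth_ρ.differentiable (by simp)) i) α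
  have hmul : HasDerivAt (fun s => ∑ i, p s i * A.ρ (x s) i α)
      (∑ i, (deriv (fun s => p s i) t * A.ρ (x t) i α
        + p t i * ∑ j, pderiv' (fun z => A.ρ z i α) (x t) j * deriv (fun s => x s j) t)) t :=
    HasDerivAt.fun_sum fun i _ =>
      (differentiable_pi.1 hpd i t).hasDerivAt.mul
        (hasDerivAt_comp_curve (hρd i (x t)) (hxd t))
  -- The two sides of the multiplier relation agree only on `[t₀,t₁]`; their two-sided
  -- derivatives at `t` agree because both exist and derivatives within `[t₀,t₁]` are unique.
  have hderiv : deriv (fun s => pLy L (x s) (y s) α) t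
      = deriv (fun s => ∑ i, p s i * A.ρ (x s) i α) t := by
    have hu : UniqueDiffWithinAt ℝ (Icc t₀ t₁) t := uniqueDiffOn_Icc ht t htI
    rw [← (differentiable_pLy_comp hL hxd hyd α t).derivWithin hu,
      ← hmul.differentiableAt.derivWithin hu]
    exact derivWithin_congr (fun s hs => (h1 s hs α).symm) (h1 t htI α).symm
  rw [hderiv, hmul.deriv]
  simp only [h2 t htI, h3 t htI, ← h1 t htI]
  exact multiplier_contraction (A.ρ (x t)) (fun j β i => pderiv' (fun z => A.ρ z j β) (x t) i)
    (A.C (x t)) (p t) (fun i => pLx L (x t) (y t) i) (y t) α (fun i β => hA (x t) i α β)
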